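/- For all positive integers r and m, there exist infinitely many primes p such that pm is a Schemmel nontotient number of order r (i.e., pm is not in the range of S_r). -/

import Mathlib

/-- The `r`-th Schemmel totient function: multiplicative, with
`S_r(p^a) = 0` if `p ≤ r` and `S_r(p^a) = p^(a-1) * (p - r)` if `p > r`. -/
def schemmel (r n : ℕ) : ℕ :=
  n.factorization.prod (fun p a => if p ≤ r then 0 else p ^ (a - 1) * (p - r))

/-!
Suppose `S_r(x) = p * m` with `p > m + r` prime. The prime `p` divides some factor
`q ^ (a - 1) * (q - r)` of `S_r(x)`. If `p = q`, then `p - r`, being coprime to `p`, divides `m`,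
which is too small. Otherwise `q - r = p * d` with `d ∣ m`, so `p * d + r` is prime.
But `d + r` properly divides `p * d + r` whenever `p ≡ 1 [MOD d + r]`, so this is impossible for the
infinitely many primes `p > m + r` that are congruent to `1` modulo `∏ d ∈ m.divisors, (d + r)`.
-/

theorem schemmel_eq_prod_primeFactors (r n : ℕ) :
    schemmel r n = ∏ q ∈ n.primeFactors, q ^ (n.factorization q - 1) * (q - r) := by
  rw [schemmel, Nat.prod_factorization_eq_prod_primeFactors]
  refine Finset.prod_congr rfl fun q _ => ?_
  split_ifs with hqr
  · rw [Nat.sub_eq_zero_of_le hqr, mul_zero]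
  · rfl

theorem sub_dvd_schemmel {n q : ℕ} (r : ℕ) (hq : q ∈ n.primeFactors) : q - r ∣ schemmel r n := by
  rw [schemmel_eq_prod_primeFactors]
  exact (Dvd.intro_left _ rfl).trans
    (Finset.dvd_prod_of_mem (fun q => q ^ (n.factorization q - 1) * (q - r)) hq)

theorem mem_primeFactors_or_exists_dvd_sub_of_dvd_schemmel {r n p : ℕ} (hp : p.Prime)
    (hdvd : p ∣ schemmel r n) : p ∈ n.primeFactors ∨ ∃ q ∈ n.primeFactors, p ∣ q - r := by
  rw [schemmel_eq_prod_primeFactors, hp.prime.dvd_finsetProd_iff] at hdvd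
  obtain ⟨q, hq, hpq⟩ := hdvd
  rcases hp.dvd_mul.1 hpq with hpow | hsub
  · have hp_eq : p = q :=
      (Nat.prime_dvd_prime_iff_eq hp (Nat.prime_of_mem_primeFactors hq)).1 (hp.dvd_of_dvd_pow hpow)
    exact .inl (hp_eq ▸ hq)
  · exact .inr ⟨q, hq, hsub⟩

theorem exists_prime_mul_add_of_schemmel_eq_mul {r m p x : ℕ} (hr : 0 < r) (hm : 0 < m)
    (hp : p.Prime) (hlt : m + r < p) (hx : schemmel r x = p * m) :
    ∃ d, d ∣ m ∧ (p * d + r).Prime := by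
  have sub_dvd {q : ℕ} (hq : q ∈ x.primeFactors) : q - r ∣ p * m := hx ▸ sub_dvd_schemmel r hq
  rcases mem_primeFactors_or_exists_dvd_sub_of_dvd_schemmel hp (hx ▸ dvd_mul_right p m) with
    hpx | ⟨q, hq, d, hd⟩
  · have hcop : (p - r).Coprime p := (Nat.coprime_of_lt_prime (by omega) (by omega) hp).symm
    have hle : p - r ≤ m := Nat.le_of_dvd hm (hcop.dvd_of_dvd_mul_left (sub_dvd hpx))
    omega
  · have hdm : d ∣ m := Nat.dvd_of_mul_dvd_mul_left hp.pos (hd ▸ sub_dvd hq)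
    have hqr : 0 < q - r := Nat.pos_of_dvd_of_pos (sub_dvd hq) (Nat.mul_pos hp.pos hm)
    have hq_eq : p * d + r = q := by omega
    exact ⟨d, hdm, hq_eq ▸ Nat.prime_of_mem_primeFactors hq⟩

theorem not_prime_mul_add_of_modEq_one {p d r : ℕ} (hp : 1 < p) (hd : 0 < d) (hr : 0 < r)
    (h : p ≡ 1 [MOD d + r]) : ¬ (p * d + r).Prime := by
  have hmod : p * d + r ≡ d + r [MOD d + r] := by
    simpa only [one_mul] using (h.mul_right d).add_right r
  have hdvd : d + r ∣ p * d + r := (hmod.dvd_iff dvd_rfl).2 dvd_rfl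
  have hlt : d + r < p * d + r := Nat.add_lt_add_right (lt_mul_left hd hp) r
  exact Nat.not_prime_of_dvd_of_lt hdvd (by omega) hlt

theorem infinite_setOfPred_prime_forall_not_prime_mul_add {r : ℕ} (hr : 0 < r) {D : Finset ℕ}
    (hD : ∀ d ∈ D, 0 < d) : {p : ℕ | p.Prime ∧ ∀ d ∈ D, ¬ (p * d + r).Prime}.Infinite := by
  have hprod : ∏ d ∈ D, (d + r) ≠ 0 := Finset.prod_ne_zero_iff.2 fun d _ => by omega
  refine (Nat.infinite_setOfPred_prime_modEq_one hprod).mono ?_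
  rintro p ⟨hp, hmod⟩
  exact ⟨hp, fun d hd => not_prime_mul_add_of_modEq_one hp.one_lt (hD d hd) hr
    (hmod.of_dvd (Finset.dvd_prod_of_mem (· + r) hd))⟩

theorem infinite_primes_nontotient_mul (r m : ℕ) (hr : 0 < r) (hm : 0 < m) :
    {p : ℕ | p.Prime ∧ ¬ ∃ x : ℕ, 0 < x ∧ schemmel r x = p * m}.Infinite := by
  have hinf : {p : ℕ | p.Prime ∧ ∀ d ∈ m.divisors, ¬ (p * d + r).Prime}.Infinite :=
    infinite_setOfPred_prime_forall_not_prime_mul_add hr fun _ => Nat.pos_of_mem_divisors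
  refine (hinf.sdiff (Set.finite_Iic (m + r))).mono ?_
  rintro p ⟨⟨hp, hcomposite⟩, hlt⟩
  refine ⟨hp, ?_⟩
  rintro ⟨x, -, hx⟩
  obtain ⟨d, hd, hprime⟩ :=
    exists_prime_mul_add_of_schemmel_eq_mul hr hm hp (not_le.1 hlt) hx
  exact hcomposite d (Nat.mem_divisors.2 ⟨hd, hm.ne'⟩) hprime
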